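/- Let T be a τ-theory, let M be a T-existentially closed τ-structure, and let N be a model of T_∀ having M as a substructure. Let ψ(x⃗,y⃗,z⃗) be a quantifier-free τ-formula and a⃗ a finite tuple of elements of M. If N satisfies ∀x⃗∃y⃗ ψ(x⃗,y⃗,a⃗), then M satisfies ∀x⃗∃y⃗ ψ(x⃗,y⃗,a⃗). -/

import Mathlib

namespace ModelCompanionship

open FirstOrder Language

universe u v

variable {L : FirstOrder.Language.{u, v}}

/-- A bundled `L`-structure with carrier in `Type (max u v)`. -/
structure BStruc (L : FirstOrder.Language.{u, v}) where
  /-- the underlying set of the structure -/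
  carrier : Type (max u v)
  /-- the interpretation of the symbols of `L` -/
  struc : L.Structure carrier

attribute [instance] BStruc.struc

/-- Iterated existential quantification of the last `k` bound variables. -/
def exsN {α : Type*} : ∀ {m k : ℕ}, L.BoundedFormula α (m + k) → L.BoundedFormula α m
  | _, 0, φ => φ
  | _, _ + 1, φ => exsN φ.ex

/-- `ψ` is a universal (`Π₁`) sentence: `∀ x⃗, φ` with `φ` quantifier-free. -/
def IsUniversalSentence (ψ : L.Sentence) : Prop :=
  ∃ (n : ℕ) (φ : L.BoundedFormula Empty n), φ.IsQF ∧ ψ = φ.alls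

/-- `ψ` is a `Π₂` sentence: `∀ x⃗, ∃ y⃗, φ` with `φ` quantifier-free. -/
def IsPi2Sentence (ψ : L.Sentence) : Prop :=
  ∃ (m k : ℕ) (φ : L.BoundedFormula Empty (m + k)), φ.IsQF ∧ ψ = (exsN φ).alls

/-- `ψ` holds in every model of `T`. -/
def SemConseq (T : L.Theory) (ψ : L.Sentence) : Prop :=
  ∀ M : BStruc L, M.carrier ⊨ T → M.carrier ⊨ ψ

/-- `T` is consistent: it has a model. -/
def Consistent (T : L.Theory) : Prop :=
  ∃ M : BStruc L, M.carrier ⊨ T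

/-- `T` is complete: it is consistent and decides every sentence. -/
def IsCompleteTheory (T : L.Theory) : Prop :=
  Consistent T ∧ ∀ ψ : L.Sentence, SemConseq T ψ ∨ SemConseq T ψ.not

/-- `T_∀`: the set of universal sentences true in every model of `T`. -/
def univFrag (T : L.Theory) : L.Theory :=
  {ψ | IsUniversalSentence ψ ∧ SemConseq T ψ}

/-- Two formulas in the same free variables are `T`-equivalent. -/
def TEquiv (T : L.Theory) {n : ℕ} (φ ψ : L.Formula (Fin n)) : Prop :=
  ∀ M : BStruc L, M.carrier ⊨ T → ∀ v : Fin n → M.carrier, φ.Realize v ↔ ψ.Realize v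

section Maps

variable {M : Type (max u v)} {N : Type (max u v)} [L.Structure M] [L.Structure N]

/-- `f` preserves and reflects all first-order formulas (with parameters). -/
def ElementaryOn (f : M → N) : Prop :=
  ∀ (n : ℕ) (φ : L.Formula (Fin n)) (v : Fin n → M),
    φ.Realize v ↔ φ.Realize fun i => f (v i)

/-- The embedding `e` is `Σ₁`-elementary: every existential formula with parameters
from the domain which holds in the codomain holds in the domain. -/
def Sigma1Elementary (e : M ↪[L] N) : Prop :=
  ∀ (n k : ℕ) (φ : L.BoundedFormula (Fin n) k), φ.IsQF → ∀ v : Fin n → M,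
    (φ.exs.Realize fun i => e (v i)) → φ.exs.Realize v

end Maps

/-- `M` is a `T`-existentially closed structure. -/
def IsEC (T : L.Theory) (M : Type (max u v)) [L.Structure M] : Prop :=
  (∃ (N : BStruc L) (_ : M ↪[L] N.carrier), N.carrier ⊨ T) ∧
    ∀ (N : BStruc L) (e : M ↪[L] N.carrier), N.carrier ⊨ T → Sigma1Elementary e

/-- `T` is model complete: substructure inclusions between models of `T` are elementary. -/
def IsModelComplete (T : L.Theory) : Prop :=
  ∀ (M N : BStruc L) (e : M.carrier ↪[L] N.carrier),
    M.carrier ⊨ T → N.carrier ⊨ T → ElementaryOn (L := L) fun a => e a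

/-- `T*` is a model companion of `T`. -/
def IsModelCompanion (T Tstar : L.Theory) : Prop :=
  (∀ M : BStruc L, M.carrier ⊨ T →
      ∃ (N : BStruc L) (_ : M.carrier ↪[L] N.carrier), N.carrier ⊨ Tstar) ∧
    (∀ M : BStruc L, M.carrier ⊨ Tstar →
      ∃ (N : BStruc L) (_ : M.carrier ↪[L] N.carrier), N.carrier ⊨ T) ∧
    IsModelComplete Tstar

/-!
A structure satisfying `T_∀` embeds in a model of `T`: by compactness it suffices that each
quantifier-free formula true in it at some tuple is satisfiable in a model of `T`, and otherwise
the universal closure of its negation would belong to `T_∀`. Hence every inclusion of the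
existentially closed `M` into a model `N` of `T_∀` extends to an inclusion of `M` into a model of
`T`, and existential formulas go up from `N` to that model and then down to `M`. So `M` is
`Σ₁`-elementary in `N`, and the inner existential formula `∃ y⃗ ψ(x⃗, y⃗, a⃗)` can be pulled back to
`M` separately for each `x⃗` in `M`.
-/

section Formulas

variable {α β : Type*} {m n k : ℕ} {A : Type*} [L.Structure A]

theorem realize_exsN (φ : L.BoundedFormula α (m + k)) (v : α → A) (xs : Fin m → A) :
    (exsN φ).Realize v xs ↔ ∃ ys : Fin k → A, φ.Realize v (Fin.append xs ys) := by
  induction k with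
  | zero =>
    rw [Unique.exists_iff, Fin.append_right_nil _ _ rfl]
    rfl
  | succ k ih =>
    rw [exsN, ih]
    constructor
    · rintro ⟨ys, h⟩
      obtain ⟨y, hy⟩ := BoundedFormula.realize_ex.1 h
      exact ⟨Fin.snoc ys y, by rwa [Fin.append_snoc]⟩
    · rintro ⟨ys, h⟩
      rw [← Fin.snoc_init_self ys, Fin.append_snoc] at h
      exact ⟨Fin.init ys, BoundedFormula.realize_ex.2 ⟨_, h⟩⟩

theorem isQF_toFormula {φ : L.BoundedFormula α n} (hφ : φ.IsQF) :
    BoundedFormula.IsQF φ.toFormula := by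
  induction hφ with
  | falsum => exact .falsum
  | of_isAtomic h =>
    cases h with
    | equal t₁ t₂ => exact (BoundedFormula.IsAtomic.equal _ _).isQF
    | rel R ts => exact (BoundedFormula.IsAtomic.rel _ _).isQF
  | imp _ _ ih₁ ih₂ => exact ih₁.imp ih₂

theorem isQF_iInf [Finite β] {f : β → L.BoundedFormula α n} (hf : ∀ b, (f b).IsQF) :
    (BoundedFormula.iInf f).IsQF := by
  change BoundedFormula.IsQF (List.foldr (· ⊓ ·) ⊤ (List.map f _))
  induction (@Finset.univ β (Fintype.ofFinite β)).toList with
  | nil => exact .top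
  | cons b _ ih => exact (hf b).inf ih

/-- The universal closure of `θ`, used to produce members of `T_∀`. The variables of `θ` are
relabelled into `Empty ⊕ α` because `Formula.iAlls` binds the right summand only. -/
noncomputable def univClosure [Finite α] (θ : L.Formula α) : L.Sentence :=
  (θ.relabel Sum.inr : L.Formula (Empty ⊕ α)).iAlls α

theorem isUniversalSentence_univClosure [Finite α] {θ : L.Formula α}
    (hθ : BoundedFormula.IsQF θ) : IsUniversalSentence (univClosure θ) :=
  ⟨_, _, (hθ.relabel _).relabel _, rfl⟩

theorem realize_univClosure [Finite α] {θ : L.Formula α} :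
    A ⊨ univClosure θ ↔ ∀ v : α → A, θ.Realize v := by
  simp only [univClosure, Sentence.Realize, Formula.realize_iAlls, Formula.realize_relabel,
    Function.comp_def, Sum.elim_inr]

theorem realize_congr_freeVarFinset [DecidableEq α] {φ : L.BoundedFormula α n} {v w : α → A}
    {xs : Fin n → A} (h : ∀ a ∈ φ.freeVarFinset, v a = w a) :
    φ.Realize v xs ↔ φ.Realize w xs :=
  (BoundedFormula.realize_restrictFreeVar (f := Subtype.val) v fun _ => rfl).symm.trans
    (BoundedFormula.realize_restrictFreeVar w fun a => h a a.2)

end Formulas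

section UniversalFragment

variable {T : L.Theory} {N : Type*} [L.Structure N] {α : Type*}

theorem realize_of_model_univFrag_of_finite [Finite α] (hN : N ⊨ univFrag T) {θ : L.Formula α}
    (hθ : BoundedFormula.IsQF θ)
    (hT : ∀ K : BStruc L, K.carrier ⊨ T → ∀ w : α → K.carrier, θ.Realize w) (v : α → N) :
    θ.Realize v :=
  realize_univClosure.1 (hN.realize_of_mem _
    ⟨isUniversalSentence_univClosure hθ, fun K hK => realize_univClosure.2 (hT K hK)⟩) v

theorem realize_of_model_univFrag [Nonempty α] (hN : N ⊨ univFrag T) {θ : L.Formula α}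
    (hθ : BoundedFormula.IsQF θ)
    (hT : ∀ K : BStruc L, K.carrier ⊨ T → ∀ w : α → K.carrier, θ.Realize w) (v : α → N) :
    θ.Realize v := by
  classical
  obtain ⟨b⟩ := ‹Nonempty α›
  -- `α` retracts onto a finite set containing the variables of `θ`; adding `b` makes it nonempty.
  let F : Finset α := insert b (BoundedFormula.freeVarFinset θ)
  have : Nonempty F := ⟨b, Finset.mem_insert_self _ _⟩
  let retract : α → F := Function.invFun Subtype.val
  have retract_eq (a : α) (ha : a ∈ BoundedFormula.freeVarFinset θ) : (retract a : α) = a :=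
    Function.invFun_eq ⟨⟨a, Finset.mem_insert_of_mem ha⟩, rfl⟩
  have realize_retract : (θ.relabel retract).Realize (v ∘ Subtype.val) :=
    realize_of_model_univFrag_of_finite hN (hθ.relabel _)
      (fun K hK w => Formula.realize_relabel.2 (hT K hK _)) _
  refine (realize_congr_freeVarFinset fun a ha => ?_).1 (Formula.realize_relabel.1 realize_retract)
  exact congrArg v (retract_eq a ha)

theorem exists_model_realize_of_finite [Nonempty α] (hN : N ⊨ univFrag T) {v : α → N}
    {S : Set (L.Formula α)} (hS : S.Finite)
    (hSv : ∀ σ ∈ S, BoundedFormula.IsQF σ ∧ σ.Realize v) :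
    ∃ K : BStruc L, K.carrier ⊨ T ∧ ∃ w : α → K.carrier, ∀ σ ∈ S, σ.Realize w := by
  have : Finite S := hS
  let conj : L.Formula α := Formula.iInf fun σ : S => (σ : L.Formula α)
  have conj_isQF : BoundedFormula.IsQF conj := isQF_iInf fun σ => (hSv σ σ.2).1
  by_contra! hT
  have not_conj : conj.not.Realize v :=
    realize_of_model_univFrag hN conj_isQF.not (fun K hK w => by
      obtain ⟨σ, hσ, hw⟩ := hT K hK w
      exact fun h => hw (Formula.realize_iInf.1 h ⟨σ, hσ⟩)) v
  exact not_conj (Formula.realize_iInf.2 fun σ => (hSv σ σ.2).2)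

end UniversalFragment

section Diagram

variable (L) in
/-- The (quantifier-free) diagram of `N`: the quantifier-free sentences with parameters in `N` which
are true in `N`, each obtained from a formula whose free variables are elements of `N`. Its models
are the structures with a chosen embedding of `N`. -/
def qfDiagram (N : Type*) [L.Structure N] : L[[N]].Theory :=
  Formula.equivSentence '' {θ : L.Formula N | BoundedFormula.IsQF θ ∧ θ.Realize id}

theorem exists_embedding_of_realize_isQF {N K : Type*} [L.Structure N] [L.Structure K] (w : N → K)
    (hw : ∀ θ : L.Formula N, BoundedFormula.IsQF θ → θ.Realize id → θ.Realize w) :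
    ∃ e : N ↪[L] K, ⇑e = w := by
  have realize_iff (θ : L.Formula N) (hθ : BoundedFormula.IsQF θ) :
      θ.Realize w ↔ θ.Realize id :=
    ⟨fun h => by_contra fun hid => hw θ.not hθ.not hid h, hw θ hθ⟩
  have injective : Function.Injective w := fun x y hxy => by
    simpa [Formula.realize_equal] using (realize_iff (Term.equal (.var x) (.var y))
      (BoundedFormula.IsAtomic.equal _ _).isQF).1 (by simpa [Formula.realize_equal] using hxy)
  have map_fun {n : ℕ} (f : L.Functions n) (x : Fin n → N) :
      w (Structure.funMap f x) = Structure.funMap f (w ∘ x) := by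
    have := hw (Term.equal (.func f fun t => .var (x t)) (.var (Structure.funMap f x)))
      (BoundedFormula.IsAtomic.equal _ _).isQF (by simp [Formula.realize_equal])
    simpa [Formula.realize_equal, Function.comp_def] using this.symm
  have map_rel {n : ℕ} (R : L.Relations n) (x : Fin n → N) :
      Structure.RelMap R (w ∘ x) ↔ Structure.RelMap R x := by
    simpa [Formula.realize_rel, Function.comp_def] using
      realize_iff (R.formula fun t => .var (x t)) (BoundedFormula.IsAtomic.rel _ _).isQF
  exact ⟨⟨⟨w, injective⟩, map_fun, map_rel⟩, rfl⟩

variable {T : L.Theory}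

theorem isSatisfiable_onTheory_union_qfDiagram {N : Type*} [L.Structure N] [Nonempty N]
    (hN : N ⊨ univFrag T) :
    ((L.lhomWithConstants N).onTheory T ∪ qfDiagram L N).IsSatisfiable := by
  rw [Theory.isSatisfiable_iff_isFinitelySatisfiable]
  intro T₀ hT₀
  let S : Set (L.Formula N) :=
    {θ | Formula.equivSentence θ ∈ T₀ ∧ BoundedFormula.IsQF θ ∧ θ.Realize id}
  have S_finite : S.Finite :=
    (T₀.finite_toSet.preimage Formula.equivSentence.injective.injOn).subset fun _ h => h.1
  obtain ⟨K, hK, w, hw⟩ := exists_model_realize_of_finite hN S_finite fun _ h => h.2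
  let := constantsOn.structure w
  have : Nonempty K.carrier := .map w inferInstance
  have : K.carrier ⊨ (T₀ : L[[N]].Theory) := by
    refine ⟨fun σ hσ => ?_⟩
    rcases hT₀ hσ with hσT | ⟨θ, hθ, rfl⟩
    · exact ((LHom.onTheory_model _ _).2 hK).realize_of_mem _ hσT
    · exact (Formula.realize_equivSentence K.carrier θ).2 (hw θ ⟨hσ, hθ⟩)
  exact Theory.Model.isSatisfiable K.carrier

theorem exists_embedding_model_of_model_univFrag {N : Type (max u v)} [L.Structure N] [Nonempty N]
    (hN : N ⊨ univFrag T) :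
    ∃ (K : BStruc L) (_ : N ↪[L] K.carrier), K.carrier ⊨ T := by
  obtain ⟨K⟩ := isSatisfiable_onTheory_union_qfDiagram hN
  let : L.Structure K := (L.lhomWithConstants N).reduct K
  have : (L.lhomWithConstants N).IsExpansionOn K := LHom.isExpansionOn_reduct _ _
  have K_model : K ⊨ T :=
    (LHom.onTheory_model (L.lhomWithConstants N) T).1 (K.is_model.mono Set.subset_union_left)
  obtain ⟨e, -⟩ := exists_embedding_of_realize_isQF (L := L) (fun a : N => (L.con a : K))
    fun θ hθ hid => (Formula.realize_equivSentence K θ).1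
      (K.is_model.realize_of_mem _ (.inr ⟨θ, ⟨hθ, hid⟩, rfl⟩))
  exact ⟨⟨K, inferInstance⟩, e, K_model⟩

end Diagram

section Sigma1Elementary

variable {M N K : Type (max u v)} [L.Structure M] [L.Structure N] [L.Structure K]

namespace Sigma1Elementary

theorem of_surjective {i : M ↪[L] N} (hi : Function.Surjective i) : Sigma1Elementary i := by
  intro n k φ hφ v h
  obtain ⟨zs, hzs⟩ := BoundedFormula.realize_exs.1 h
  obtain ⟨ys, rfl⟩ := hi.comp_left zs
  exact BoundedFormula.realize_exs.2 ⟨ys, (hφ.realize_embedding i).1 hzs⟩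

theorem of_comp {i : M ↪[L] N} {j : N ↪[L] K} (hji : Sigma1Elementary (j.comp i)) :
    Sigma1Elementary i := by
  intro n k φ hφ v h
  obtain ⟨zs, hzs⟩ := BoundedFormula.realize_exs.1 h
  exact hji n k φ hφ v (BoundedFormula.realize_exs.2 ⟨j ∘ zs, (hφ.realize_embedding j).2 hzs⟩)

variable {i : M ↪[L] N} {α β : Type*} [Finite α]

theorem realize_iExs [Finite β] (hi : Sigma1Elementary i)
    {θ : L.Formula (α ⊕ β)} (hθ : BoundedFormula.IsQF θ) {v : α → M}
    (h : (θ.iExs β).Realize (i ∘ v)) : (θ.iExs β).Realize v := by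
  obtain ⟨n, ⟨e⟩⟩ := Finite.exists_equiv_fin α
  let θ' : L.Formula (Fin n ⊕ β) := θ.relabel (Sum.map e id)
  have realize_θ' (A : Type (max u v)) [L.Structure A] (w : α → A) :
      (θ'.iExs β).Realize (w ∘ e.symm) ↔ (θ.iExs β).Realize w := by
    simp [θ', Formula.realize_iExs, Formula.realize_relabel, Sum.elim_comp_map,
      Function.comp_assoc]
  exact (realize_θ' M v).1 (hi n _ _ ((hθ.relabel _).relabel _) _ ((realize_θ' N (i ∘ v)).2 h))

variable {p q : ℕ} {ψ : L.BoundedFormula α (p + q)} {a : α → M}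

theorem realize_exsN (hi : Sigma1Elementary i) (hψ : ψ.IsQF) {x : Fin p → M}
    (h : (exsN ψ).Realize (i ∘ a) (i ∘ x)) : (exsN ψ).Realize a x := by
  let regroup : α ⊕ Fin (p + q) → (α ⊕ Fin p) ⊕ Fin q :=
    (Equiv.sumAssoc _ _ _).symm ∘ Sum.map id finSumFinEquiv.symm
  let θ : L.Formula ((α ⊕ Fin p) ⊕ Fin q) := ψ.toFormula.relabel regroup
  have realize_θ (A : Type (max u v)) [L.Structure A] (b : α → A) (xs : Fin p → A) :
      (θ.iExs (Fin q)).Realize (Sum.elim b xs) ↔ (exsN ψ).Realize b xs := by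
    rw [Formula.realize_iExs, ModelCompanionship.realize_exsN]
    refine exists_congr fun ys => ?_
    have inl : Sum.elim (Sum.elim b xs) ys ∘ regroup ∘ Sum.inl = b := rfl
    have inr : Sum.elim (Sum.elim b xs) ys ∘ regroup ∘ Sum.inr = Fin.append xs ys := by
      ext t
      cases t using Fin.addCases <;> simp [regroup]
    rw [Formula.realize_relabel, BoundedFormula.realize_toFormula]
    exact iff_of_eq (congrArg₂ _ inl inr)
  rw [← realize_θ] at h ⊢
  exact hi.realize_iExs ((isQF_toFormula hψ).relabel _) (by rwa [Sum.comp_elim])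

theorem realize_alls_exsN (hi : Sigma1Elementary i) (hψ : ψ.IsQF)
    (h : (exsN ψ).alls.Realize (i ∘ a)) : (exsN ψ).alls.Realize a :=
  BoundedFormula.realize_alls.2 fun _ => hi.realize_exsN hψ (BoundedFormula.realize_alls.1 h _)

end Sigma1Elementary

theorem IsEC.sigma1Elementary {T : L.Theory} (hM : IsEC T M) (i : M ↪[L] N)
    (hN : N ⊨ univFrag T) : Sigma1Elementary i := by
  -- `IsSatisfiable` asks for a nonempty model, and `T` may have none when `N` is empty.
  rcases isEmpty_or_nonempty N with _ | _
  · exact .of_surjective isEmptyElim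
  · obtain ⟨K, j, hK⟩ := exists_embedding_model_of_model_univFrag hN
    exact .of_comp (hM.2 K (j.comp i) hK)

end Sigma1Elementary

/-- `Π₂`-sentences with parameters in a `T`-ec structure `M` descend from
any extension of `M` which models `T_∀`. -/
theorem pi2_descends_to_ec (T : L.Theory)
    (M N : Type (max u v)) [L.Structure M] [L.Structure N]
    (hM : IsEC T M) (i : M ↪[L] N) (hN : N ⊨ univFrag T)
    {p q r : ℕ} (ψ : L.BoundedFormula (Fin r) (p + q)) (hψ : ψ.IsQF)
    (a : Fin r → M)
    (h : (exsN ψ).alls.Realize fun j => i (a j)) :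
    (exsN ψ).alls.Realize a :=
  (hM.sigma1Elementary i hN).realize_alls_exsN hψ h

end ModelCompanionship
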